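/- For p ∈ [0,1], the depolarizing qubit channel C_p(ρ) = p • ρ + (1−p) • (tr ρ / 2) • 1 is entanglement-breaking (i.e. there exist a finite set Λ, a POVM {E_λ} on ℂ² and density matrices {ρ_λ} on ℂ² with C_p(ρ) = ∑_λ tr(E_λ ρ) • ρ_λ for all ρ : Matrix ℂ (Fin 2) (Fin 2)) if and only if p ≤ 1/3. -/

import Mathlib

open scoped BigOperators Matrix ComplexOrder Kronecker ComplexConjugate

/-- A POVM on `ℂ^d` with outcome set `B`: positive semidefinite effects summing to `1`. -/
def IsPOVM {d : ℕ} {B : Type} [Fintype B] (E : B → Matrix (Fin d) (Fin d) ℂ) : Prop :=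
  (∀ b, (E b).PosSemidef) ∧ ∑ b, E b = 1

/-- A family of POVMs `E b y` (outcome `b`, setting `y`) on `ℂ^d` is jointly measurable
if it arises from a single POVM `G` by classical post-processing. -/
def JointlyMeasurable {d : ℕ} {B Y : Type} [Fintype B] [Fintype Y]
    (E : B → Y → Matrix (Fin d) (Fin d) ℂ) : Prop :=
  ∃ (n : ℕ) (G : Fin n → Matrix (Fin d) (Fin d) ℂ) (p : B → Y → Fin n → ℝ),
    IsPOVM G ∧ (∀ b y l, 0 ≤ p b y l) ∧ (∀ y l, ∑ b, p b y l = 1) ∧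
    (∀ b y, E b y = ∑ l, p b y l • G l)

/-- An assemblage `σ b y` on `ℂ^d` is unsteerable if it admits a local-hidden-state model. -/
def Unsteerable {d : ℕ} {B Y : Type} [Fintype B] [Fintype Y]
    (σ : B → Y → Matrix (Fin d) (Fin d) ℂ) : Prop :=
  ∃ (n : ℕ) (τ : Fin n → Matrix (Fin d) (Fin d) ℂ) (p : B → Y → Fin n → ℝ),
    (∀ l, (τ l).PosSemidef) ∧ (∑ l, (τ l).trace = 1) ∧
    (∀ b y l, 0 ≤ p b y l) ∧ (∀ y l, ∑ b, p b y l = 1) ∧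
    (∀ b y, σ b y = ∑ l, p b y l • τ l)

/-!
If `Φ ρ = ∑ l, tr (E l * ρ) • σ l` is entanglement-breaking, then the trace of `Φ` as a linear
operator on matrices is `∑ l, tr (E l * σ l)`, which lies between `0` and `∑ l, tr (E l) = d`. For
the depolarizing channel this trace is `1 + (d² - 1) p`, so `-1 / (d² - 1) ≤ p ≤ 1 / (d + 1)`.

Conversely, `p = 1 / (d + 1)` is attained by mixing two measure-and-prepare channels: measuring in
the states with entries of equal modulus and phases cube roots of unity gives
`ρ ↦ (ρ + tr ρ • 1 - diag ρ) / d`, and measuring in the standard basis restores the diagonal. The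
other parameters follow by composing with depolarizing maps which are merely positive, such as the
universal NOT `ρ ↦ (tr ρ • 1 - ρ) / (d - 1)`.
-/

open Matrix

section PosSemidef

variable {𝕜 n : Type*} [RCLike 𝕜] [Fintype n] {A B : Matrix n n 𝕜}

theorem posSemidef_trace_smul_one_sub [DecidableEq n] (hA : A.PosSemidef) :
    (A.trace • (1 : Matrix n n 𝕜) - A).PosSemidef := by
  open scoped MatrixOrder in
  have hle : A ≤ algebraMap ℝ (Matrix n n 𝕜) (∑ i, hA.1.eigenvalues i) := by
    refine le_algebraMap_of_spectrum_le (fun x hx ↦ ?_) hA.1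
    obtain ⟨i, rfl⟩ := hA.1.spectrum_real_eq_range_eigenvalues ▸ hx
    exact Finset.single_le_sum (fun j _ ↦ hA.eigenvalues_nonneg j) (Finset.mem_univ i)
  rw [hA.1.trace_eq_sum_eigenvalues, ← RCLike.ofReal_sum, ← RCLike.real_smul_eq_coe_smul,
    ← Algebra.algebraMap_eq_smul_one]
  exact hle

theorem trace_mul_nonneg_of_posSemidef (hA : A.PosSemidef) (hB : B.PosSemidef) :
    0 ≤ (A * B).trace := by
  classical
  obtain ⟨C, rfl⟩ : ∃ C : Matrix n n 𝕜, A = Cᴴ * C := by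
    open scoped MatrixOrder in
    exact CStarAlgebra.nonneg_iff_eq_star_mul_self.mp hA.nonneg
  rw [Matrix.mul_assoc, trace_mul_comm]
  exact (hB.mul_mul_conjTranspose_same C).trace_nonneg

theorem trace_mul_le_of_posSemidef (hA : A.PosSemidef) (hB : B.PosSemidef) :
    (A * B).trace ≤ A.trace * B.trace := by
  classical
  have h := trace_mul_nonneg_of_posSemidef hA (posSemidef_trace_smul_one_sub hB)
  rwa [Matrix.mul_sub, mul_smul_one, trace_sub, trace_smul, smul_eq_mul, mul_comm, sub_nonneg] at h

end PosSemidef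

/-- Density matrices, the states of the quantum system `ℂⁿ`. -/
def IsDensityMatrix {n : Type*} [Fintype n] (ρ : Matrix n n ℂ) : Prop :=
  ρ.PosSemidef ∧ ρ.trace = 1

/-- Entanglement-breaking channels from `ℂᵈ` to `ℂᵉ`, in measure-and-prepare form. The finite
outcome set is some `Fin n`; see `IsEntanglementBreaking.of_isPOVM` for other outcome types. -/
def IsEntanglementBreaking {d e : ℕ}
    (Φ : Matrix (Fin d) (Fin d) ℂ →ₗ[ℂ] Matrix (Fin e) (Fin e) ℂ) : Prop :=
  ∃ (n : ℕ) (E : Fin n → Matrix (Fin d) (Fin d) ℂ) (σ : Fin n → Matrix (Fin e) (Fin e) ℂ),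
    IsPOVM E ∧ (∀ l, IsDensityMatrix (σ l)) ∧ ∀ ρ, Φ ρ = ∑ l, (E l * ρ).trace • σ l

namespace IsEntanglementBreaking

variable {d e f : ℕ}

theorem of_isPOVM {B : Type} [Fintype B] {E : B → Matrix (Fin d) (Fin d) ℂ}
    {σ : B → Matrix (Fin e) (Fin e) ℂ}
    {Φ : Matrix (Fin d) (Fin d) ℂ →ₗ[ℂ] Matrix (Fin e) (Fin e) ℂ}
    (hE : IsPOVM E) (hσ : ∀ b, IsDensityMatrix (σ b))
    (hΦ : ∀ ρ, Φ ρ = ∑ b, (E b * ρ).trace • σ b) : IsEntanglementBreaking Φ := by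
  let ε := (Fintype.equivFin B).symm
  refine ⟨Fintype.card B, E ∘ ε, σ ∘ ε, ⟨fun l ↦ hE.1 _, ?_⟩, fun l ↦ hσ _, fun ρ ↦ ?_⟩
  · exact (ε.sum_comp E).trans hE.2
  · exact (hΦ ρ).trans (ε.sum_comp fun b ↦ (E b * ρ).trace • σ b).symm

theorem comp {Φ : Matrix (Fin d) (Fin d) ℂ →ₗ[ℂ] Matrix (Fin e) (Fin e) ℂ}
    {Ψ : Matrix (Fin e) (Fin e) ℂ →ₗ[ℂ] Matrix (Fin f) (Fin f) ℂ}
    (hΦ : IsEntanglementBreaking Φ) (hΨ : ∀ ρ, IsDensityMatrix ρ → IsDensityMatrix (Ψ ρ)) :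
    IsEntanglementBreaking (Ψ ∘ₗ Φ) := by
  obtain ⟨n, E, σ, hE, hσ, h⟩ := hΦ
  exact ⟨n, E, Ψ ∘ σ, hE, fun l ↦ hΨ _ (hσ l), fun ρ ↦ by simp [h]⟩

theorem convex_setOf : Convex ℝ {Φ : Matrix (Fin d) (Fin d) ℂ →ₗ[ℂ] Matrix (Fin e) (Fin e) ℂ |
    IsEntanglementBreaking Φ} := by
  rintro Φ ⟨m, E, σ, ⟨hE, hE_sum⟩, hσ, hΦ⟩ Ψ ⟨n, F, τ, ⟨hF, hF_sum⟩, hτ, hΨ⟩ s t hs ht hst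
  refine of_isPOVM (E := Sum.elim (s • E) (t • F)) (σ := Sum.elim σ τ) ⟨?_, ?_⟩ ?_ fun ρ ↦ ?_
  · rintro (k | l)
    exacts [(hE k).smul hs, (hF l).smul ht]
  · simp [← Finset.smul_sum, hE_sum, hF_sum, ← add_smul, hst]
  · rintro (k | l)
    exacts [hσ k, hτ l]
  · simp [hΦ, hΨ, Finset.smul_sum, mul_smul]

theorem exists_trace_eq {Φ : Module.End ℂ (Matrix (Fin d) (Fin d) ℂ)}
    (hΦ : IsEntanglementBreaking Φ) :
    ∃ (n : ℕ) (E σ : Fin n → Matrix (Fin d) (Fin d) ℂ), IsPOVM E ∧ (∀ l, IsDensityMatrix (σ l)) ∧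
      LinearMap.trace ℂ _ Φ = ∑ l, (E l * σ l).trace := by
  obtain ⟨n, E, σ, hE, hσ, h⟩ := hΦ
  have hΦ_eq : Φ = ∑ l, (traceLinearMap (Fin d) ℂ ℂ ∘ₗ LinearMap.mulLeft ℂ (E l)).smulRight (σ l) :=
    LinearMap.ext fun ρ ↦ by simp [h]
  exact ⟨n, E, σ, hE, hσ, by simp [hΦ_eq, map_sum, LinearMap.trace_smulRight]⟩

theorem trace_nonneg {Φ : Module.End ℂ (Matrix (Fin d) (Fin d) ℂ)}
    (hΦ : IsEntanglementBreaking Φ) : 0 ≤ LinearMap.trace ℂ _ Φ := by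
  obtain ⟨n, E, σ, hE, hσ, h⟩ := hΦ.exists_trace_eq
  exact h ▸ Finset.sum_nonneg fun l _ ↦ trace_mul_nonneg_of_posSemidef (hE.1 l) (hσ l).1

theorem trace_le {Φ : Module.End ℂ (Matrix (Fin d) (Fin d) ℂ)}
    (hΦ : IsEntanglementBreaking Φ) : LinearMap.trace ℂ _ Φ ≤ d := by
  obtain ⟨n, E, σ, hE, hσ, h⟩ := hΦ.exists_trace_eq
  calc LinearMap.trace ℂ _ Φ = ∑ l, (E l * σ l).trace := h
    _ ≤ ∑ l, (E l).trace * (σ l).trace :=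
      Finset.sum_le_sum fun l _ ↦ trace_mul_le_of_posSemidef (hE.1 l) (hσ l).1
    _ = (∑ l, E l).trace := by simp [(hσ _).2, trace_sum]
    _ = d := by simp [hE.2]

end IsEntanglementBreaking

section PhaseState

variable {n : Type*} [Fintype n]

/- Square roots of unity would not do: modulo 2 the character is also trivial when `i = k` and
`j = l`, which would contribute the transpose of `ρ` to the phase channel. -/
theorem sum_stdAddChar_sub_add_sub [DecidableEq n] (i j k l : n) :
    ∑ a : n → ZMod 3, ZMod.stdAddChar (a i - a j + (a k - a l)) =
      if (i = j ∧ k = l) ∨ (i = l ∧ k = j) then (3 : ℂ) ^ Fintype.card n else 0 := by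
  let f : (n → ZMod 3) →+ ZMod 3 :=
    let π := Pi.evalAddMonoidHom fun _ : n ↦ ZMod 3
    π i - π j + (π k - π l)
  have hf : ZMod.stdAddChar.compAddMonoidHom f = 0 ↔ (i = j ∧ k = l) ∨ (i = l ∧ k = j) := by
    refine ⟨fun h ↦ ?_, ?_⟩
    · have hf_zero (a : n → ZMod 3) : a i - a j + (a k - a l) = 0 :=
        ZMod.injective_stdAddChar ((DFunLike.congr_fun h a).trans (AddChar.map_zero_eq_one _).symm)
      have hi := hf_zero (Pi.single i 1)
      have hk := hf_zero (Pi.single k 1)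
      have : (1 + 1 : ZMod 3) ≠ 0 := by decide
      simp only [Pi.single_apply] at hi hk
      grind
    · rintro (⟨rfl, rfl⟩ | ⟨rfl, rfl⟩) <;> ext a <;> simp [f]
  calc ∑ a : n → ZMod 3, ZMod.stdAddChar (a i - a j + (a k - a l))
      = ∑ a, (ZMod.stdAddChar (N := 3)).compAddMonoidHom f a := rfl
    _ = _ := by
        classical
        rw [AddChar.sum_eq_ite]
        simp [hf]

/-- The pure state of the vector with entries `ω ^ a i / √d`, where `ω = exp (2πi / 3)` and `d` is
the dimension; measuring in these states produces all of an optimal depolarizing channel but its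
action on the diagonal. The projection is scaled by `1 / d`, so that no square root is needed. -/
noncomputable def phaseState (a : n → ZMod 3) : Matrix n n ℂ :=
  (Fintype.card n : ℂ)⁻¹ •
    vecMulVec (fun i ↦ ZMod.stdAddChar (a i)) (star fun i ↦ ZMod.stdAddChar (a i))

theorem phaseState_apply (a : n → ZMod 3) (i j : n) :
    phaseState a i j = (Fintype.card n : ℂ)⁻¹ * ZMod.stdAddChar (a i - a j) := by
  simp [phaseState, vecMulVec_apply, sub_eq_add_neg, AddChar.map_add_eq_mul,
    AddChar.map_neg_eq_conj]

theorem isDensityMatrix_phaseState [Nonempty n] (a : n → ZMod 3) :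
    IsDensityMatrix (phaseState a) := by
  refine ⟨(posSemidef_vecMulVec_self_star _).smul (by positivity), ?_⟩
  simp [trace, phaseState_apply]

theorem sum_trace_phaseState_mul_smul_phaseState [DecidableEq n] (ρ : Matrix n n ℂ) :
    ∑ a : n → ZMod 3, (phaseState a * ρ).trace • phaseState a =
      ((3 : ℂ) ^ Fintype.card n / Fintype.card n ^ 2) •
        (ρ + ρ.trace • (1 : Matrix n n ℂ) - diagonal ρ.diag) := by
  ext i j
  have hmoment : ∑ k, ∑ l, ρ l k * ∑ a : n → ZMod 3, ZMod.stdAddChar (a i - a j + (a k - a l)) =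
      (ρ + ρ.trace • (1 : Matrix n n ℂ) - diagonal ρ.diag) i j * 3 ^ Fintype.card n := by
    simp only [sum_stdAddChar_sub_add_sub]
    rcases eq_or_ne i j with rfl | hij
    · have hcond (k l : n) : (k = l ∨ i = l ∧ k = i) ↔ k = l := by grind
      simp [hcond, trace, ← Finset.sum_mul]
    · simp [hij, ite_and]
  calc (∑ a : n → ZMod 3, (phaseState a * ρ).trace • phaseState a) i j
      = ∑ a : n → ZMod 3, ∑ k, ∑ l, ((Fintype.card n : ℂ) ^ 2)⁻¹ *
          (ρ l k * ZMod.stdAddChar (a i - a j + (a k - a l))) := by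
        simp only [Matrix.sum_apply, Matrix.smul_apply, trace, diag_apply, mul_apply,
          phaseState_apply, smul_eq_mul, Finset.sum_mul, AddChar.map_add_eq_mul]
        exact Finset.sum_congr rfl fun a _ ↦ Finset.sum_congr rfl fun k _ ↦
          Finset.sum_congr rfl fun l _ ↦ by ring
    _ = ((Fintype.card n : ℂ) ^ 2)⁻¹ * ∑ k, ∑ l, ρ l k *
          ∑ a : n → ZMod 3, ZMod.stdAddChar (a i - a j + (a k - a l)) := by
        simp only [Finset.mul_sum]
        rw [Finset.sum_comm]
        exact Finset.sum_congr rfl fun k _ ↦ Finset.sum_comm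
    _ = _ := by
        rw [hmoment, Matrix.smul_apply, smul_eq_mul]
        ring

end PhaseState

variable {d : ℕ}

/-- The completely dephasing channel, which erases the off-diagonal entries: the other component of
the optimal depolarizing channel. -/
def dephasing (d : ℕ) : Module.End ℂ (Matrix (Fin d) (Fin d) ℂ) :=
  diagonalLinearMap (Fin d) ℂ ℂ ∘ₗ diagLinearMap (Fin d) ℂ ℂ

theorem dephasing_apply (ρ : Matrix (Fin d) (Fin d) ℂ) : dephasing d ρ = diagonal ρ.diag :=
  rfl

/-- The channel that measures in the phase states, each with the same weight, and prepares the state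
observed. It is defined by its closed form, as a linear combination of simpler maps. -/
noncomputable def phaseChannel (d : ℕ) : Module.End ℂ (Matrix (Fin d) (Fin d) ℂ) :=
  (d : ℝ)⁻¹ • (LinearMap.id + (traceLinearMap (Fin d) ℂ ℂ).smulRight 1 - dephasing d)

theorem phaseChannel_apply (ρ : Matrix (Fin d) (Fin d) ℂ) :
    phaseChannel d ρ =
      (d : ℂ)⁻¹ • (ρ + ρ.trace • (1 : Matrix (Fin d) (Fin d) ℂ) - diagonal ρ.diag) := by
  simp only [phaseChannel, LinearMap.smul_apply, LinearMap.sub_apply, LinearMap.add_apply,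
    LinearMap.id_apply, LinearMap.smulRight_apply, traceLinearMap_apply, dephasing_apply,
    ← Complex.coe_smul, Complex.ofReal_inv, Complex.ofReal_natCast]

/-- The depolarizing channel `ρ ↦ p • ρ + (1 - p) • (tr ρ / d) • 1` on `ℂᵈ`. The parameter is any
real number, so the map need not be positive. -/
noncomputable def depolarizing (d : ℕ) (p : ℝ) : Module.End ℂ (Matrix (Fin d) (Fin d) ℂ) :=
  p • LinearMap.id + ((1 - p) / d) • (traceLinearMap (Fin d) ℂ ℂ).smulRight 1

theorem isEntanglementBreaking_dephasing : IsEntanglementBreaking (dephasing d) := by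
  let e (i : Fin d) : Matrix (Fin d) (Fin d) ℂ := diagonal (Pi.single i 1)
  have he_pos (i : Fin d) : (e i).PosSemidef :=
    PosSemidef.diagonal (Pi.single_nonneg.mpr zero_le_one)
  refine .of_isPOVM (E := e) (σ := e) ⟨he_pos, ?_⟩ (fun i ↦ ⟨he_pos i, ?_⟩) fun ρ ↦ ?_
  · ext i j
    simp [e, Matrix.sum_apply, diagonal_apply, Matrix.one_apply, Pi.single_apply]
  · simp [e]
  · ext i j
    simp [e, dephasing_apply, Matrix.sum_apply, diagonal_apply, trace, Pi.single_apply]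

theorem isEntanglementBreaking_phaseChannel [NeZero d] :
    IsEntanglementBreaking (phaseChannel d) := by
  have hd : (d : ℂ) ≠ 0 := NeZero.ne _
  have hsum (ρ : Matrix (Fin d) (Fin d) ℂ) :
      ∑ a : Fin d → ZMod 3, (((d : ℂ) / 3 ^ d) • phaseState a * ρ).trace • phaseState a =
        phaseChannel d ρ := by
    simp only [Matrix.smul_mul, trace_smul, smul_assoc, ← Finset.smul_sum,
      sum_trace_phaseState_mul_smul_phaseState, Fintype.card_fin, phaseChannel_apply]
    rw [smul_smul]
    congr 1
    field_simp
  refine .of_isPOVM ⟨fun a ↦ ?_, ?_⟩ isDensityMatrix_phaseState fun ρ ↦ (hsum ρ).symm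
  · exact (isDensityMatrix_phaseState a).1.smul (by positivity)
  · calc ∑ a : Fin d → ZMod 3, ((d : ℂ) / 3 ^ d) • phaseState a
        = ∑ a : Fin d → ZMod 3, (((d : ℂ) / 3 ^ d) • phaseState a * 1).trace • phaseState a := by
          simp [(isDensityMatrix_phaseState _).2]
      _ = phaseChannel d 1 := hsum 1
      _ = 1 := by simp [phaseChannel_apply, smul_smul, hd, ← Matrix.diagonal_one]

theorem depolarizing_apply (p : ℝ) (ρ : Matrix (Fin d) (Fin d) ℂ) :
    depolarizing d p ρ =
      (p : ℂ) • ρ + (((1 : ℂ) - p) * (ρ.trace / d)) • (1 : Matrix (Fin d) (Fin d) ℂ) := by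
  simp only [depolarizing, LinearMap.add_apply, LinearMap.smul_apply, LinearMap.id_apply,
    LinearMap.smulRight_apply, traceLinearMap_apply, ← Complex.coe_smul]
  push_cast
  module

theorem depolarizing_one_div_eq_add [NeZero d] :
    depolarizing d (1 / (d + 1)) =
      ((d : ℝ) / (d + 1)) • phaseChannel d + ((1 : ℝ) / (d + 1)) • dephasing d := by
  have hd : (d : ℝ) ≠ 0 := NeZero.ne _
  rw [depolarizing, phaseChannel]
  match_scalars <;> field_simp <;> ring

theorem depolarizing_comp_depolarizing [NeZero d] (p q : ℝ) :
    depolarizing d p ∘ₗ depolarizing d q = depolarizing d (p * q) := by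
  have hd : (d : ℂ) ≠ 0 := NeZero.ne _
  ext1 ρ
  simp only [LinearMap.comp_apply, depolarizing_apply, trace_add, trace_smul, trace_one,
    Fintype.card_fin, smul_eq_mul, Complex.ofReal_mul]
  match_scalars <;> field_simp
  ring

theorem trace_depolarizing [NeZero d] (p : ℝ) :
    LinearMap.trace ℂ _ (depolarizing d p) = ((1 + ((d : ℝ) ^ 2 - 1) * p : ℝ) : ℂ) := by
  have hd : (d : ℂ) ≠ 0 := NeZero.ne _
  simp only [depolarizing, map_add, LinearMap.map_smul_of_tower, LinearMap.trace_id,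
    Module.finrank_matrix, Fintype.card_fin, Module.finrank_self, mul_one, Nat.cast_mul,
    LinearMap.trace_smulRight, traceLinearMap_apply, trace_one, Complex.real_smul]
  push_cast
  field_simp
  ring

theorem isDensityMatrix_depolarizing [NeZero d] {p : ℝ} (hp : 0 ≤ 1 + (d - 1) * p) (hp' : p ≤ 1)
    {ρ : Matrix (Fin d) (Fin d) ℂ} (hρ : IsDensityMatrix ρ) :
    IsDensityMatrix (depolarizing d p ρ) := by
  have hd : (d : ℂ) ≠ 0 := NeZero.ne _
  constructor
  · have hdecomp : depolarizing d p ρ =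
        ((1 - p) / d) • (ρ.trace • (1 : Matrix (Fin d) (Fin d) ℂ) - ρ) +
          ((1 + (d - 1) * p) / d) • ρ := by
      simp only [depolarizing_apply, ← Complex.coe_smul]
      push_cast
      match_scalars <;> field_simp
      ring
    rw [hdecomp]
    exact ((posSemidef_trace_smul_one_sub hρ.1).smul
      (div_nonneg (sub_nonneg.mpr hp') d.cast_nonneg)).add (hρ.1.smul (div_nonneg hp d.cast_nonneg))
  · simp [depolarizing, hρ.2, hd]

theorem isEntanglementBreaking_depolarizing_one_div [NeZero d] :
    IsEntanglementBreaking (depolarizing d (1 / (d + 1))) := by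
  rw [depolarizing_one_div_eq_add]
  exact IsEntanglementBreaking.convex_setOf isEntanglementBreaking_phaseChannel
    isEntanglementBreaking_dephasing (by positivity) (by positivity) (by field_simp)

theorem isEntanglementBreaking_depolarizing [NeZero d] {p : ℝ}
    (hp : 0 ≤ 1 + ((d : ℝ) ^ 2 - 1) * p) (hp' : (d + 1) * p ≤ 1) :
    IsEntanglementBreaking (depolarizing d p) := by
  have hfactor : depolarizing d p =
      depolarizing d ((d + 1) * p) ∘ₗ depolarizing d (1 / (d + 1)) := by
    rw [depolarizing_comp_depolarizing]
    congr 1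
    field_simp
  rw [hfactor]
  exact isEntanglementBreaking_depolarizing_one_div.comp fun ρ ↦
    isDensityMatrix_depolarizing (by linarith) hp'

theorem depolarizing_entanglement_breaking_iff_general (hd : 2 ≤ d) (p : ℝ) :
    IsEntanglementBreaking (depolarizing d p) ↔
      -1 / ((d : ℝ) ^ 2 - 1) ≤ p ∧ p ≤ 1 / (d + 1) := by
  have : NeZero d := ⟨by lia⟩
  have hd' : (2 : ℝ) ≤ d := by exact_mod_cast hd
  rw [div_le_iff₀' (by nlinarith), le_div_iff₀' (by positivity)]
  refine ⟨fun h ↦ ?_, fun hp ↦ isEntanglementBreaking_depolarizing (by linarith [hp.1]) hp.2⟩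
  have hlower : 0 ≤ 1 + ((d : ℝ) ^ 2 - 1) * p := by
    exact_mod_cast trace_depolarizing (d := d) p ▸ h.trace_nonneg
  have hupper : 1 + ((d : ℝ) ^ 2 - 1) * p ≤ d := by
    exact_mod_cast trace_depolarizing (d := d) p ▸ h.trace_le
  have hfactor : ((d : ℝ) - 1) * ((d + 1) * p) ≤ (d - 1) * 1 := by linarith
  exact ⟨by linarith, le_of_mul_le_mul_left hfactor (by linarith)⟩

/-- the depolarizing qubit channel
`C_p(ρ) = p • ρ + (1-p) • (tr ρ / 2) • 1` is entanglement-breaking iff `p ≤ 1/3`. -/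
theorem depolarizing_entanglement_breaking_iff
    (p : ℝ) (hp0 : 0 ≤ p) (hp1 : p ≤ 1) :
    (∃ (n : ℕ) (E : Fin n → Matrix (Fin 2) (Fin 2) ℂ)
        (ρs : Fin n → Matrix (Fin 2) (Fin 2) ℂ),
      IsPOVM E ∧
      (∀ l, (ρs l).PosSemidef ∧ (ρs l).trace = 1) ∧
      (∀ ρ : Matrix (Fin 2) (Fin 2) ℂ,
        (p : ℂ) • ρ + (((1 : ℂ) - p) * (ρ.trace / 2)) • (1 : Matrix (Fin 2) (Fin 2) ℂ)
          = ∑ l, (E l * ρ).trace • ρs l)) ↔ p ≤ 1 / 3 := by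
  have h := depolarizing_entanglement_breaking_iff_general le_rfl p
  simp only [IsEntanglementBreaking, depolarizing_apply, Nat.cast_ofNat] at h
  exact h.trans ⟨fun hp ↦ by linarith, fun hp ↦ by constructor <;> linarith⟩
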